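/- arXiv:2208.10907 — 4 statements merged into one kernel-verified Lean document; each statement's English description precedes it below -/
import Mathlib

section
/- Let ι be a finite index set. For each i ∈ ι let Q i and P i be real orthogonal n×n matrices ((Q i)ᵀ·(Q i) = 1 = (Q i)·(Q i)ᵀ and likewise for P i), with the columns of Q i partitioned into a redundant part Uᴿ i (first p columns) and a skeleton part Uˢ i (last r columns, p + r = n), and the rows of P i partitioned into Vᴿ i (first p rows) and Vˢ i (last r rows). Let 𝔸 be the block matrix indexed by ι × Fin n whose (i,j) block is A i j, and assume that for all i ≠ j the off-diagonal block is low-rank in the shared bases: A i j = (Uˢ i)·(S i j)·(Vˢ j) for some r×r matrix S i j. Then 𝔸 = blockDiagonal Q · Ŝ · blockDiagonal P, where Ŝ is the block matrix whose (i,i) block is (Q i)ᵀ·(A i i)·(P i)ᵀ and whose (i,j) block for i ≠ j is the sparsified block fromBlocks 0 0 0 (S i j). -/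
open Matrix

/-- Multiplying by block-diagonal matrices on both sides acts blockwise. -/
theorem blockDiagonal_mul_mul_blockDiagonal_apply {ι l m n o R : Type*} [Fintype ι]
    [DecidableEq ι] [Fintype m] [Fintype n] [NonUnitalSemiring R]
    (Q : ι → Matrix l m R) (M : Matrix (m × ι) (n × ι) R) (P : ι → Matrix n o R)
    (a : l) (b : o) (i j : ι) :
    (blockDiagonal Q * M * blockDiagonal P) (a, i) (b, j) =
      (Q i * (of fun c d => M (c, i) (d, j)) * P j) a b := by
  simp [mul_apply, blockDiagonal_apply, Fintype.sum_prod_type, ite_mul, mul_ite]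

/-- A block matrix supported on its lower right block only sees the corresponding columns
of its left factor and rows of its right factor. -/
theorem mul_fromBlocks_zero_mul {k l m n o q R : Type*} [Fintype l] [Fintype m] [Fintype n]
    [Fintype o] [NonUnitalSemiring R]
    (Q : Matrix k (l ⊕ m) R) (S : Matrix m o R) (P : Matrix (n ⊕ o) q R) :
    Q * fromBlocks (0 : Matrix l n R) 0 0 S * P =
      Q.submatrix id Sum.inr * S * P.submatrix Sum.inr id := by
  ext a b
  simp [mul_apply, Fintype.sum_sum_type]

/-- **USV decomposition of a BLR²/HSS matrix.**
With orthogonal shared bases `Q i` (columns split into redundant `Uᴿ i = (Q i)·inl`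
and skeleton `Uˢ i = (Q i)·inr` parts) and `P i` (rows split likewise into
`Vᴿ i` and `Vˢ i`), if every off-diagonal block satisfies
`A i j = Uˢ i · S i j · Vˢ j`, then the full block matrix `𝔸` (whose `(i,j)` block
is `A i j`) factors as `blockDiagonal Q · Ŝ · blockDiagonal P`, where the diagonal
blocks of `Ŝ` are `(Q i)ᵀ · A i i · (P i)ᵀ` and the off-diagonal blocks are the
sparsified `fromBlocks 0 0 0 (S i j)`.  Here `n = p + r` and rows/columns of each
block are indexed by `Fin p ⊕ Fin r`; Mathlib's `blockDiagonal` convention places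
the block index `ι` second in the product index type. -/
theorem blr2_usv_decomposition {ι : Type*} [Fintype ι] [DecidableEq ι] {p r : ℕ}
    (Q P : ι → Matrix (Fin p ⊕ Fin r) (Fin p ⊕ Fin r) ℝ)
    (hQ₁ : ∀ i, (Q i)ᵀ * Q i = 1) (hQ₂ : ∀ i, Q i * (Q i)ᵀ = 1)
    (hP₁ : ∀ i, (P i)ᵀ * P i = 1) (hP₂ : ∀ i, P i * (P i)ᵀ = 1)
    (A : ι → ι → Matrix (Fin p ⊕ Fin r) (Fin p ⊕ Fin r) ℝ)
    (S : ι → ι → Matrix (Fin r) (Fin r) ℝ)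
    (hlr : ∀ i j, i ≠ j →
      A i j = (Q i).submatrix id Sum.inr * S i j * (P j).submatrix Sum.inr id)
    (𝔸 : Matrix ((Fin p ⊕ Fin r) × ι) ((Fin p ⊕ Fin r) × ι) ℝ)
    (h𝔸 : ∀ i j a b, 𝔸 (a, i) (b, j) = A i j a b)
    (Shat : Matrix ((Fin p ⊕ Fin r) × ι) ((Fin p ⊕ Fin r) × ι) ℝ)
    (hShatDiag : ∀ i a b, Shat (a, i) (b, i) = ((Q i)ᵀ * A i i * (P i)ᵀ) a b)
    (hShatOff : ∀ i j, i ≠ j → ∀ a b,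
      Shat (a, i) (b, j) = fromBlocks (0 : Matrix (Fin p) (Fin p) ℝ) 0 0 (S i j) a b) :
    𝔸 = blockDiagonal Q * Shat * blockDiagonal P := by
  ext ⟨a, i⟩ ⟨b, j⟩
  rw [h𝔸, blockDiagonal_mul_mul_blockDiagonal_apply]
  by_cases hij : i = j
  · subst hij
    have hblock : (of fun c d => Shat (c, i) (d, i)) = (Q i)ᵀ * A i i * (P i)ᵀ :=
      Matrix.ext fun c d => hShatDiag i c d
    have hcancel : Q i * ((Q i)ᵀ * A i i * (P i)ᵀ) * P i = A i i := by
      calc Q i * ((Q i)ᵀ * A i i * (P i)ᵀ) * P i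
          = Q i * (Q i)ᵀ * A i i * ((P i)ᵀ * P i) := by simp only [Matrix.mul_assoc]
        _ = A i i := by rw [hQ₂, hP₁, Matrix.one_mul, Matrix.mul_one]
    rw [hblock, hcancel]
  · have hblock : (of fun c d => Shat (c, i) (d, j)) =
        fromBlocks (0 : Matrix (Fin p) (Fin p) ℝ) 0 0 (S i j) :=
      Matrix.ext fun c d => hShatOff i j hij c d
    rw [hblock, mul_fromBlocks_zero_mul, hlr i j hij]
end

section
/- (Nullity theorem) Let K be a field, let A be an invertible n×n matrix over K, and let B = A⁻¹. For all subsets α, β of the index set {0,…,n−1}, the ranks of the corresponding submatrices satisfy rank(B[α, β]) + n = rank(A[βᶜ, αᶜ]) + |α| + |β|, where B[α, β] denotes the submatrix of B with rows indexed by α and columns indexed by β, and βᶜ, αᶜ denote complements in {0,…,n−1}. -/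
open Matrix

/-- The submatrix of `M` with rows restricted to the finset `γ` and columns
restricted to the finset `δ`, via the order embeddings of the finsets. -/
def finsetSubmatrix {K : Type*} {n : ℕ} (M : Matrix (Fin n) (Fin n) K)
    (γ δ : Finset (Fin n)) : Matrix (Fin γ.card) (Fin δ.card) K :=
  M.submatrix (γ.orderEmbOfFin rfl) (δ.orderEmbOfFin rfl)

namespace Matrix

/-- If `X` maps the kernel of `M` into that of `N`, and is injective on the kernel of `M`, as
witnessed by block identities, then the nullity of `M` is at most the nullity of `N`. -/
theorem finrank_ker_mulVecLin_le_of_block_identities {K p q r s : Type*} [Field K]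
    [Fintype p] [Fintype r] [Fintype s] [DecidableEq p]
    {M : Matrix r p K} {N : Matrix q s K} {X : Matrix s p K}
    {C : Matrix q r K} {D : Matrix p r K} {E : Matrix p s K}
    (hzero : C * M + N * X = 0) (hone : D * M + E * X = 1) :
    Module.finrank K (LinearMap.ker M.mulVecLin) ≤
      Module.finrank K (LinearMap.ker N.mulVecLin) := by
  have hmaps : ∀ x ∈ LinearMap.ker M.mulVecLin, X.mulVecLin x ∈ LinearMap.ker N.mulVecLin := by
    intro x hx
    rw [LinearMap.mem_ker, mulVecLin_apply] at hx ⊢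
    have h := congrArg (· *ᵥ x) hzero
    simpa [add_mulVec, ← mulVec_mulVec, hx] using h
  refine LinearMap.finrank_le_finrank_of_injective (f := X.mulVecLin.restrict hmaps) ?_
  rw [← LinearMap.ker_eq_bot, LinearMap.ker_eq_bot']
  rintro ⟨x, hx⟩ hXx
  have hXx' : X *ᵥ x = 0 := congrArg Subtype.val hXx
  rw [LinearMap.mem_ker, mulVecLin_apply] at hx
  have h := congrArg (· *ᵥ x) hone
  simp only [add_mulVec, ← mulVec_mulVec, hx, hXx', mulVec_zero, add_zero, one_mulVec] at h
  exact Subtype.ext h.symm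

theorem rank_add_finrank_ker_mulVecLin {K m n : Type*} [Field K] [Fintype n]
    (M : Matrix m n K) :
    M.rank + Module.finrank K (LinearMap.ker M.mulVecLin) = Fintype.card n := by
  rw [rank, LinearMap.finrank_range_add_finrank_ker, Module.finrank_fintype_fun_eq_card]

end Matrix

theorem finsetSubmatrix_mul_add_compl {K : Type*} [Field K] {n : ℕ}
    (A B : Matrix (Fin n) (Fin n) K) (γ α δ : Finset (Fin n)) :
    finsetSubmatrix A γ α * finsetSubmatrix B α δ +
      finsetSubmatrix A γ αᶜ * finsetSubmatrix B αᶜ δ = finsetSubmatrix (A * B) γ δ := by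
  have hsum : ∀ (s : Finset (Fin n)) (f : Fin n → K),
      ∑ i, f (s.orderEmbOfFin rfl i) = ∑ i ∈ s, f i := by
    intro s f
    rw [← Finset.sum_coe_sort s f]
    exact (s.orderIsoOfFin rfl).toEquiv.sum_comp fun i => f i
  ext i j
  simp only [finsetSubmatrix, Matrix.add_apply, mul_apply, submatrix_apply]
  rw [hsum α fun k => A (γ.orderEmbOfFin rfl i) k * B k (δ.orderEmbOfFin rfl j),
    hsum αᶜ fun k => A (γ.orderEmbOfFin rfl i) k * B k (δ.orderEmbOfFin rfl j),
    Finset.sum_add_sum_compl]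

theorem finsetSubmatrix_one_self {K : Type*} [Field K] {n : ℕ} (γ : Finset (Fin n)) :
    finsetSubmatrix (1 : Matrix (Fin n) (Fin n) K) γ γ = 1 :=
  submatrix_one _ (γ.orderEmbOfFin rfl).injective

theorem finsetSubmatrix_one_of_disjoint {K : Type*} [Field K] {n : ℕ} {γ δ : Finset (Fin n)}
    (h : Disjoint γ δ) : finsetSubmatrix (1 : Matrix (Fin n) (Fin n) K) γ δ = 0 := by
  ext i j
  exact one_apply_ne
    (Finset.disjoint_iff_ne.mp h _ (γ.orderEmbOfFin_mem rfl i) _ (δ.orderEmbOfFin_mem rfl j))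

/-- **Fiedler–Markham nullity theorem.**
For an invertible matrix `A` with inverse `B = A⁻¹` and index subsets `α, β`,
`rank B[α, β] + n = rank A[βᶜ, αᶜ] + |α| + |β|`. -/
theorem nullity_theorem {K : Type*} [Field K] {n : ℕ}
    (A : Matrix (Fin n) (Fin n) K) (hA : IsUnit A)
    (α β : Finset (Fin n)) :
    (finsetSubmatrix A⁻¹ α β).rank + n =
      (finsetSubmatrix A βᶜ αᶜ).rank + α.card + β.card := by
  have hdet : IsUnit A.det := (isUnit_iff_isUnit_det A).mp hA
  have hAB (γ δ : Finset (Fin n)) := finsetSubmatrix_mul_add_compl A A⁻¹ γ α δ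
  have hBA (γ δ : Finset (Fin n)) := finsetSubmatrix_mul_add_compl A⁻¹ A γ β δ
  simp only [mul_nonsing_inv A hdet] at hAB
  simp only [nonsing_inv_mul A hdet] at hBA
  have hle := finrank_ker_mulVecLin_le_of_block_identities
    ((hAB βᶜ β).trans (finsetSubmatrix_one_of_disjoint disjoint_compl_left))
    ((hAB β β).trans (finsetSubmatrix_one_self β))
  have hge := finrank_ker_mulVecLin_le_of_block_identities
    ((add_comm _ _).trans
      ((hBA α αᶜ).trans (finsetSubmatrix_one_of_disjoint disjoint_compl_right)))
    ((add_comm _ _).trans ((hBA αᶜ αᶜ).trans (finsetSubmatrix_one_self αᶜ)))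
  have hrankB := rank_add_finrank_ker_mulVecLin (finsetSubmatrix A⁻¹ α β)
  have hrankA := rank_add_finrank_ker_mulVecLin (finsetSubmatrix A βᶜ αᶜ)
  have hcard := α.card_add_card_compl
  rw [Fintype.card_fin] at hrankA hrankB hcard
  omega
end

section
/- Let K be a field and let A = fromBlocks A₁₁ A₁₂ A₂₁ A₂₂ be a block matrix over K with square diagonal blocks. Suppose A = L·U where L = fromBlocks L₁₁ 0 L₂₁ L₂₂ is block lower triangular, U = fromBlocks U₁₁ U₁₂ 0 U₂₂ is block upper triangular, and the blocks L₁₁ and U₁₁ are invertible. Then rank(A₂₁) = rank(L₂₁) and rank(A₁₂) = rank(U₁₂): the off-diagonal blocks of the LU factors have exactly the same rank as the corresponding off-diagonal blocks of A. -/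
open Matrix

/-- **LU factors preserve off-diagonal block ranks.**
If `A = L·U` with `L` block lower triangular, `U` block upper triangular, and
the leading diagonal blocks `L₁₁`, `U₁₁` invertible, then
`rank A₂₁ = rank L₂₁` and `rank A₁₂ = rank U₁₂`. -/
theorem lu_offdiagonal_rank {K : Type*} [Field K] {a b : ℕ}
    (A₁₁ L₁₁ U₁₁ : Matrix (Fin a) (Fin a) K)
    (A₁₂ U₁₂ : Matrix (Fin a) (Fin b) K)
    (A₂₁ L₂₁ : Matrix (Fin b) (Fin a) K)
    (A₂₂ L₂₂ U₂₂ : Matrix (Fin b) (Fin b) K)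
    (hLU : fromBlocks A₁₁ A₁₂ A₂₁ A₂₂ =
      fromBlocks L₁₁ 0 L₂₁ L₂₂ * fromBlocks U₁₁ U₁₂ 0 U₂₂)
    (hL₁₁ : IsUnit L₁₁) (hU₁₁ : IsUnit U₁₁) :
    A₂₁.rank = L₂₁.rank ∧ A₁₂.rank = U₁₂.rank := by
  rw [fromBlocks_multiply, fromBlocks_inj] at hLU
  obtain ⟨-, h₁₂, h₂₁, -⟩ := hLU
  rw [Matrix.zero_mul, add_zero] at h₁₂
  rw [Matrix.mul_zero, add_zero] at h₂₁
  rw [h₁₂, h₂₁]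
  exact ⟨rank_mul_eq_left_of_isUnit_det _ _ ((isUnit_iff_isUnit_det _).mp hU₁₁),
    rank_mul_eq_right_of_isUnit_det _ _ ((isUnit_iff_isUnit_det _).mp hL₁₁)⟩
end

section
/- Let K be a field and let M be an invertible matrix over K indexed by Fin k ⊕ Fin m. Then the off-diagonal blocks of M⁻¹ have the same rank as the corresponding off-diagonal blocks of M: rank((M⁻¹).toBlocks₂₁) = rank(M.toBlocks₂₁) and rank((M⁻¹).toBlocks₁₂) = rank(M.toBlocks₁₂). -/
open Matrix

/-- If `A` maps `ker C` injectively into `ker G`, as certified by `G * A + H * C = 0` and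
`E * A + F * C = 1`, then the rank of `G` is at most that of `C`. -/
theorem Matrix.rank_le_of_mul_add_mul_eq {K p q n : Type*} [Field K] [Fintype p] [Fintype n]
    [DecidableEq n] {C : Matrix p n K} {G : Matrix q n K} {A E : Matrix n n K}
    {F : Matrix n p K} {H : Matrix q p K}
    (h₀ : G * A + H * C = 0) (h₁ : E * A + F * C = 1) : G.rank ≤ C.rank := by
  have h_maps : ∀ x ∈ LinearMap.ker C.mulVecLin, A.mulVecLin x ∈ LinearMap.ker G.mulVecLin := by
    intro x hx
    have hC : C *ᵥ x = 0 := by simpa using hx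
    have h := congrArg (· *ᵥ x) h₀
    simpa [add_mulVec, ← mulVec_mulVec, hC] using h
  have h_inj : Function.Injective (A.mulVecLin.restrict h_maps) := by
    rw [← LinearMap.ker_eq_bot, LinearMap.ker_eq_bot']
    rintro ⟨x, hx⟩ hAx
    have hC : C *ᵥ x = 0 := by simpa using hx
    have hA : A *ᵥ x = 0 := congrArg Subtype.val hAx
    have h := congrArg (· *ᵥ x) h₁
    exact Subtype.ext (by simpa [add_mulVec, ← mulVec_mulVec, hC, hA] using h.symm)
  have h_ker := LinearMap.finrank_le_finrank_of_injective h_inj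
  have hC := C.mulVecLin.finrank_range_add_finrank_ker
  have hG := G.mulVecLin.finrank_range_add_finrank_ker
  unfold Matrix.rank
  lia

theorem Matrix.rank_toBlocks_le_of_mul_eq_one {K m n : Type*} [Field K] [Fintype m] [Fintype n]
    [DecidableEq m] [DecidableEq n] {M N : Matrix (m ⊕ n) (m ⊕ n) K} (h : N * M = 1) :
    N.toBlocks₂₁.rank ≤ M.toBlocks₂₁.rank ∧ N.toBlocks₁₂.rank ≤ M.toBlocks₁₂.rank := by
  rw [← fromBlocks_toBlocks M, ← fromBlocks_toBlocks N, fromBlocks_multiply, ← fromBlocks_one,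
    fromBlocks_inj] at h
  obtain ⟨h₁₁, h₁₂, h₂₁, h₂₂⟩ := h
  rw [add_comm] at h₁₂ h₂₂
  exact ⟨rank_le_of_mul_add_mul_eq h₂₁ h₁₁, rank_le_of_mul_add_mul_eq h₁₂ h₂₂⟩

/-- **Corollary of the nullity theorem.**
The inverse of an invertible `2×2` block matrix has off-diagonal blocks of the
same rank as the corresponding off-diagonal blocks of the matrix itself. -/
theorem inverse_offdiagonal_block_rank {K : Type*} [Field K] {k m : ℕ}
    (M : Matrix (Fin k ⊕ Fin m) (Fin k ⊕ Fin m) K) (hM : IsUnit M) :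
    (M⁻¹).toBlocks₂₁.rank = M.toBlocks₂₁.rank ∧
    (M⁻¹).toBlocks₁₂.rank = M.toBlocks₁₂.rank := by
  have hdet : IsUnit M.det := (isUnit_iff_isUnit_det M).mp hM
  obtain ⟨h₂₁, h₁₂⟩ := rank_toBlocks_le_of_mul_eq_one (nonsing_inv_mul M hdet)
  obtain ⟨h₂₁', h₁₂'⟩ := rank_toBlocks_le_of_mul_eq_one (mul_nonsing_inv M hdet)
  exact ⟨h₂₁.antisymm h₂₁', h₁₂.antisymm h₁₂'⟩
end
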